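/- Let ν be a real number with ν ≥ 2. For every integer k ≥ 1 one has λ⁺_{ν−1,k+1} < λ⁺_{ν−2,k+2} < λ⁺_{ν−1,k+2}, where λ⁺_{ν−1,m} denotes the m-th positive zero of z ↦ J_{ν−1}(z) + J_ν(z) and λ⁺_{ν−2,m} the m-th positive zero of z ↦ J_{ν−2}(z) + J_{ν−1}(z); that is, the positive zeroes of the sums of Bessel functions of consecutive orders interlace. -/

import Mathlib

/-- Bessel function of the first kind of real order `ν`, defined via its power series
`J_ν(z) = ∑ₘ (−1)^m / (m! Γ(ν+m+1)) (z/2)^(ν+2m)` (with real-exponent powers). -/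
noncomputable def besselJ (ν z : ℝ) : ℝ :=
  ∑' m : ℕ, ((-1 : ℝ) ^ m / (Nat.factorial m * Real.Gamma (ν + m + 1))) *
    (z / 2) ^ (ν + 2 * (m : ℝ))

/-- `x` (indexed by `k ≥ 1`) enumerates the positive zeroes of `f`: it is strictly
increasing on indices `k ≥ 1`, each `x k` is a positive zero of `f`, and every positive
zero of `f` is some `x k`. -/
def EnumPosZeros (f : ℝ → ℝ) (x : ℕ → ℝ) : Prop :=
  StrictMonoOn x (Set.Ici 1) ∧ (∀ k, 1 ≤ k → 0 < x k ∧ f (x k) = 0) ∧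
    ∀ z : ℝ, 0 < z → f z = 0 → ∃ k, 1 ≤ k ∧ x k = z

/-!
Write `S_μ = J_μ + J_{μ+1}`. The recurrence for Bessel functions gives
`S_{μ-1} + S_μ = 2 (μ / z + 1) J_μ`, and at a zero `z` of `S_μ` one has
`S_μ' = (2 + (2 μ + 1) / z) J_μ`. Let `μ ≥ 0`. Alternating-series bounds show that `S_{μ-1}` and
`S_μ` are positive on `(0, 1]`, so their zeros exceed `1` and the factors of the Bessel functions
above are positive there. Hence `S_μ' S_{μ-1}` is positive at each zero of `S_μ` and `S_{μ-1}' S_μ`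
is negative at each zero of `S_{μ-1}`, so between consecutive zeros of either function the other
one changes sign. Positivity near `0` forces `S_{μ-1}` to vanish first.
-/

open Filter Set
open scoped Topology Nat

section SignChanges

lemma forall_pos_or_forall_neg_of_ne_zero {X : Type*} [TopologicalSpace X] {f : X → ℝ} {s : Set X}
    (hs : IsPreconnected s) (hf : ContinuousOn f s) (hne : ∀ z ∈ s, f z ≠ 0) :
    (∀ z ∈ s, 0 < f z) ∨ ∀ z ∈ s, f z < 0 := by
  by_contra! ⟨⟨a, ha, hfa⟩, b, hb, hfb⟩
  obtain ⟨c, hc, hfc⟩ := hs.intermediate_value ha hb hf ⟨hfa, hfb⟩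
  exact hne c hc hfc

variable {f g : ℝ → ℝ} {x y : ℝ}

lemma forall_pos_of_eventually_pos_of_ne_zero (hxy : x < y) (hf : ContinuousOn f (Ioo x y))
    (hpos : ∀ᶠ z in 𝓝[>] x, 0 < f z) (hne : ∀ z ∈ Ioo x y, f z ≠ 0) :
    ∀ z ∈ Ioo x y, 0 < f z := by
  refine (forall_pos_or_forall_neg_of_ne_zero isPreconnected_Ioo hf hne).resolve_right
    fun hneg => ?_
  obtain ⟨z, hz, hfz⟩ := (hpos.and (Ioo_mem_nhdsGT hxy)).exists
  exact hz.not_gt (hneg z hfz)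

lemma deriv_nonneg_of_eventually_pos_right (hx : f x = 0) (hpos : ∀ᶠ z in 𝓝[>] x, 0 < f z) :
    0 ≤ deriv f x := by
  by_contra! hneg
  have hsign := eventually_nhdsWithin_sign_eq_of_deriv_neg hneg hx
  obtain ⟨z, ⟨hfz, hz⟩, hxz⟩ :=
    ((hpos.and (hsign.filter_mono nhdsWithin_le_nhds)).and self_mem_nhdsWithin).exists
  rw [sign_pos hfz, sign_neg (sub_neg.2 hxz)] at hz
  contradiction

lemma deriv_nonpos_of_eventually_pos_left (hy : f y = 0) (hpos : ∀ᶠ z in 𝓝[<] y, 0 < f z) :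
    deriv f y ≤ 0 := by
  by_contra! hderiv
  have hsign := eventually_nhdsWithin_sign_eq_of_deriv_pos hderiv hy
  obtain ⟨z, ⟨hfz, hz⟩, hzy⟩ :=
    ((hpos.and (hsign.filter_mono nhdsWithin_le_nhds)).and self_mem_nhdsWithin).exists
  rw [sign_pos hfz, sign_neg (sub_neg.2 hzy)] at hz
  contradiction

lemma deriv_mul_deriv_nonpos_of_consecutive_zeros (hxy : x < y) (hf : ContinuousOn f (Ioo x y))
    (hx : f x = 0) (hy : f y = 0) (hne : ∀ z ∈ Ioo x y, f z ≠ 0) :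
    deriv f x * deriv f y ≤ 0 := by
  have of_pos {h : ℝ → ℝ} (hx : h x = 0) (hy : h y = 0) (hpos : ∀ z ∈ Ioo x y, 0 < h z) :
      deriv h x * deriv h y ≤ 0 :=
    mul_nonpos_of_nonneg_of_nonpos
      (deriv_nonneg_of_eventually_pos_right hx (eventually_of_mem (Ioo_mem_nhdsGT hxy) hpos))
      (deriv_nonpos_of_eventually_pos_left hy (eventually_of_mem (Ioo_mem_nhdsLT hxy) hpos))
  rcases forall_pos_or_forall_neg_of_ne_zero isPreconnected_Ioo hf hne with hpos | hneg
  · exact of_pos hx hy hpos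
  · simpa using of_pos (h := -f) (by simpa) (by simpa)
      fun z hz => neg_pos.2 (hneg z hz)

lemma exists_zero_Ioo_of_mul_neg (hxy : x < y) (hg : ContinuousOn g (Icc x y))
    (hneg : g x * g y < 0) : ∃ z ∈ Ioo x y, g z = 0 := by
  rcases mul_neg_iff.1 hneg with ⟨hx, hy⟩ | ⟨hx, hy⟩
  · exact intermediate_value_Ioo' hxy.le hg ⟨hy, hx⟩
  · exact intermediate_value_Ioo hxy.le hg ⟨hx, hy⟩

lemma exists_zero_between_consecutive_zeros (hxy : x < y) (hf : ContinuousOn f (Ioo x y))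
    (hg : ContinuousOn g (Icc x y)) (hx : f x = 0) (hy : f y = 0) (hne : ∀ z ∈ Ioo x y, f z ≠ 0)
    (hfgx : 0 < deriv f x * g x) (hfgy : 0 < deriv f y * g y) : ∃ z ∈ Ioo x y, g z = 0 := by
  refine exists_zero_Ioo_of_mul_neg hxy hg ?_
  have hderiv := deriv_mul_deriv_nonpos_of_consecutive_zeros hxy hf hx hy hne
  by_contra! hgg
  have hprod := mul_pos hfgx hfgy
  rw [mul_mul_mul_comm] at hprod
  exact hprod.not_ge (mul_nonpos_of_nonpos_of_nonneg hderiv hgg)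

lemma exists_zero_before_first_zero (hxy : x < y) (hf : ContinuousOn f (Ioo x y))
    (hg : ContinuousOn g (Ioc x y)) (hfpos : ∀ᶠ z in 𝓝[>] x, 0 < f z)
    (hgpos : ∀ᶠ z in 𝓝[>] x, 0 < g z) (hy : f y = 0) (hne : ∀ z ∈ Ioo x y, f z ≠ 0)
    (hfgy : 0 < deriv f y * g y) : ∃ z ∈ Ioo x y, g z = 0 := by
  have hderiv : deriv f y ≤ 0 :=
    deriv_nonpos_of_eventually_pos_left hy (eventually_of_mem (Ioo_mem_nhdsLT hxy)
      (forall_pos_of_eventually_pos_of_ne_zero hxy hf hfpos hne))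
  have hgy : g y < 0 := by
    by_contra! hgy
    exact hfgy.not_ge (mul_nonpos_of_nonpos_of_nonneg hderiv hgy)
  obtain ⟨c, hgc, hc⟩ := (hgpos.and (Ioo_mem_nhdsGT hxy)).exists
  obtain ⟨z, hz, hgz⟩ := exists_zero_Ioo_of_mul_neg hc.2
    (hg.mono fun t ht => ⟨hc.1.trans_le ht.1, ht.2⟩) (mul_neg_of_pos_of_neg hgc hgy)
  exact ⟨z, ⟨hc.1.trans hz.1, hz.2⟩, hgz⟩

end SignChanges

lemma forall_lt_of_exists_mem_Ioo {α : Type*} [LinearOrder α] {x y : ℕ → α}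
    (hy : StrictMonoOn y (Ici 1)) (hfirst : y 1 < x 1)
    (hbetween : ∀ k, 1 ≤ k → ∃ j, 1 ≤ j ∧ y j ∈ Ioo (x k) (x (k + 1))) :
    ∀ k, 1 ≤ k → y k < x k := by
  intro k hk
  induction k, hk using Nat.le_induction with
  | base => exact hfirst
  | succ k hk ih =>
    obtain ⟨j, hj, hxy, hyx⟩ := hbetween k hk
    have hkj : k < j := (hy.lt_iff_lt hk hj).1 (ih.trans hxy)
    exact (hy.monotoneOn (mem_Ici.2 (by omega)) hj hkj).trans_lt hyx

namespace EnumPosZeros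

variable {f g : ℝ → ℝ} {x y : ℕ → ℝ} {k : ℕ}

lemma pos (hx : EnumPosZeros f x) (hk : 1 ≤ k) : 0 < x k := (hx.2.1 k hk).1

lemma apply_eq_zero (hx : EnumPosZeros f x) (hk : 1 ≤ k) : f (x k) = 0 := (hx.2.1 k hk).2

lemma exists_index (hx : EnumPosZeros f x) {z : ℝ} (hz : 0 < z) (hfz : f z = 0) :
    ∃ j, 1 ≤ j ∧ x j = z := hx.2.2 z hz hfz

lemma lt_succ (hx : EnumPosZeros f x) (hk : 1 ≤ k) : x k < x (k + 1) :=
  hx.1 hk (hk.trans k.le_succ) k.lt_succ_self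

lemma first_le (hx : EnumPosZeros f x) (hk : 1 ≤ k) : x 1 ≤ x k :=
  hx.1.monotoneOn (mem_Ici.2 le_rfl) hk hk

lemma neg (hx : EnumPosZeros f x) : EnumPosZeros (fun z => -f z) x := by
  simpa [EnumPosZeros] using hx

lemma ne_zero_of_mem_Ioo (hx : EnumPosZeros f x) (hk : 1 ≤ k) :
    ∀ z ∈ Ioo (x k) (x (k + 1)), f z ≠ 0 := by
  rintro z ⟨hkz, hzk⟩ hfz
  obtain ⟨j, hj, rfl⟩ := hx.exists_index ((hx.pos hk).trans hkz) hfz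
  have hkj := (hx.1.lt_iff_lt hk hj).1 hkz
  have hjk := (hx.1.lt_iff_lt hj (mem_Ici.2 (by omega))).1 hzk
  omega

lemma ne_zero_of_mem_Ioo_first (hx : EnumPosZeros f x) : ∀ z ∈ Ioo 0 (x 1), f z ≠ 0 := by
  rintro z ⟨hz, hzx⟩ hfz
  obtain ⟨j, hj, rfl⟩ := hx.exists_index hz hfz
  exact hzx.not_ge (hx.first_le hj)

lemma exists_mem_Ioo (hx : EnumPosZeros f x) (hy : EnumPosZeros g y)
    (hf : ContinuousOn f (Ioi 0)) (hg : ContinuousOn g (Ioi 0))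
    (hfg : ∀ z, 0 < z → f z = 0 → 0 < deriv f z * g z) :
    ∀ k, 1 ≤ k → ∃ j, 1 ≤ j ∧ y j ∈ Ioo (x k) (x (k + 1)) := by
  intro k hk
  have hk' : 1 ≤ k + 1 := by omega
  have hxk := hx.pos hk
  obtain ⟨z, hz, hgz⟩ := exists_zero_between_consecutive_zeros (hx.lt_succ hk)
    (hf.mono fun t ht => hxk.trans ht.1) (hg.mono fun t ht => hxk.trans_le ht.1)
    (hx.apply_eq_zero hk) (hx.apply_eq_zero hk') (hx.ne_zero_of_mem_Ioo hk)
    (hfg _ hxk (hx.apply_eq_zero hk)) (hfg _ (hx.pos hk') (hx.apply_eq_zero hk'))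
  obtain ⟨j, hj, rfl⟩ := hy.exists_index (hxk.trans hz.1) hgz
  exact ⟨j, hj, hz⟩

lemma first_lt_first (hx : EnumPosZeros f x) (hy : EnumPosZeros g y)
    (hf : ContinuousOn f (Ioi 0)) (hg : ContinuousOn g (Ioi 0))
    (hfpos : ∀ᶠ z in 𝓝[>] 0, 0 < f z) (hgpos : ∀ᶠ z in 𝓝[>] 0, 0 < g z)
    (hfg : ∀ z, 0 < z → f z = 0 → 0 < deriv f z * g z) : y 1 < x 1 := by
  have hx₁ := hx.pos le_rfl
  have hfx₁ := hx.apply_eq_zero le_rfl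
  obtain ⟨z, hz, hgz⟩ := exists_zero_before_first_zero hx₁ (hf.mono fun t ht => ht.1)
    (hg.mono fun t ht => ht.1) hfpos hgpos hfx₁ hx.ne_zero_of_mem_Ioo_first (hfg _ hx₁ hfx₁)
  obtain ⟨j, hj, rfl⟩ := hy.exists_index hz.1 hgz
  exact (hy.first_le hj).trans_lt hz.2

theorem interlace (hx : EnumPosZeros f x) (hy : EnumPosZeros g y)
    (hf : ContinuousOn f (Ioi 0)) (hg : ContinuousOn g (Ioi 0))
    (hfpos : ∀ᶠ z in 𝓝[>] 0, 0 < f z) (hgpos : ∀ᶠ z in 𝓝[>] 0, 0 < g z)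
    (hfg : ∀ z, 0 < z → f z = 0 → 0 < deriv f z * g z)
    (hgf : ∀ z, 0 < z → g z = 0 → deriv g z * f z < 0) (hk : 1 ≤ k) :
    y k < x k ∧ x k < y (k + 1) := by
  have y_between := hx.exists_mem_Ioo hy hf hg hfg
  have x_between := hy.exists_mem_Ioo hx.neg hg hf.neg fun z hz hgz => by
    simpa using hgf z hz hgz
  have x_first : x 1 < y 2 := by
    obtain ⟨j, hj, hxj⟩ := x_between 1 le_rfl
    exact (hx.first_le hj).trans_lt hxj.2
  have y_first := hx.first_lt_first hy hf hg hfpos hgpos hfg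
  exact ⟨forall_lt_of_exists_mem_Ioo hy.1 y_first y_between k hk,
    forall_lt_of_exists_mem_Ioo (x := fun k => y (k + 1)) hx.1 x_first
      (fun k _ => x_between (k + 1) (by omega)) k hk⟩

end EnumPosZeros

/-- The Taylor coefficients of the Bessel–Clifford function of order `μ`. Since `Real.Gamma` is `0`
at its poles, the reciprocal agrees with the entire function `1 / Γ` there. -/
noncomputable def besselCliffordCoeff (μ : ℝ) (m : ℕ) : ℝ := (m ! * Real.Gamma (μ + m + 1))⁻¹

/-- The Bessel–Clifford function `C_μ(t) = ∑ₘ tᵐ / (m! Γ(μ + m + 1))`, the entire factor of the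
Bessel function: `J_μ(z) = (z / 2) ^ μ * C_μ(-(z / 2)²)`. -/
noncomputable def besselClifford (μ t : ℝ) : ℝ := ∑' m : ℕ, besselCliffordCoeff μ m * t ^ m

section BesselClifford

variable (μ t : ℝ)

lemma besselCliffordCoeff_succ_mul (m : ℕ) :
    besselCliffordCoeff μ (m + 1) * (m + 1) = besselCliffordCoeff (μ + 1) m := by
  have hshift : μ + ((m + 1 : ℕ) : ℝ) + 1 = μ + 1 + m + 1 := by push_cast; ring
  rw [besselCliffordCoeff, besselCliffordCoeff, hshift, Nat.factorial_succ]
  push_cast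
  field_simp

lemma besselCliffordCoeff_eq_mul_add_one (m : ℕ) :
    besselCliffordCoeff μ m = (μ + m + 1) * besselCliffordCoeff (μ + 1) m := by
  have hshift : μ + 1 + m + 1 = (μ + m + 1) + 1 := by ring
  rw [besselCliffordCoeff, besselCliffordCoeff, hshift]
  rcases eq_or_ne (μ + m + 1) 0 with hpole | hs
  · simp [hpole]
  · rw [Real.Gamma_add_one hs]
    field_simp

lemma besselCliffordCoeff_eq_mul_succ (m : ℕ) :
    besselCliffordCoeff μ m = (m + 1) * (μ + m + 1) * besselCliffordCoeff μ (m + 1) := by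
  rw [besselCliffordCoeff_eq_mul_add_one, ← besselCliffordCoeff_succ_mul]
  ring

lemma besselCliffordCoeff_pos {μ : ℝ} (hμ : -1 < μ) (m : ℕ) : 0 < besselCliffordCoeff μ m := by
  have : 0 < Real.Gamma (μ + m + 1) :=
    Real.Gamma_pos_of_pos (by linarith [(Nat.cast_nonneg m : (0 : ℝ) ≤ m)])
  unfold besselCliffordCoeff
  positivity

lemma summable_besselClifford : Summable fun m : ℕ => besselCliffordCoeff μ m * t ^ m := by
  refine summable_of_ratio_norm_eventually_le (r := 1 / 2) (by norm_num) ?_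
  filter_upwards [tendsto_natCast_atTop_atTop.eventually_ge_atTop (2 * |t|),
    tendsto_natCast_atTop_atTop.eventually_ge_atTop (-μ)] with m ht hμ
  have hfactor : 2 * |t| ≤ (m + 1) * (μ + m + 1) := by nlinarith [abs_nonneg t]
  simp only [norm_mul, norm_pow, Real.norm_eq_abs]
  rw [besselCliffordCoeff_eq_mul_succ μ m, abs_mul _ (besselCliffordCoeff μ (m + 1)),
    abs_of_nonneg ((by positivity : 0 ≤ 2 * |t|).trans hfactor)]
  calc |besselCliffordCoeff μ (m + 1)| * |t| ^ (m + 1)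
      = 1 / 2 * (2 * |t| * |besselCliffordCoeff μ (m + 1)| * |t| ^ m) := by ring
    _ ≤ _ := by gcongr

lemma summable_deriv_besselClifford :
    Summable fun m : ℕ => besselCliffordCoeff μ m * (m * t ^ (m - 1)) := by
  rw [← summable_nat_add_iff 1]
  refine (summable_besselClifford (μ + 1) t).congr fun m => ?_
  rw [← besselCliffordCoeff_succ_mul, Nat.add_sub_cancel]
  push_cast
  ring

lemma tsum_deriv_besselClifford :
    ∑' m : ℕ, besselCliffordCoeff μ m * (m * t ^ (m - 1)) = besselClifford (μ + 1) t := by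
  rw [(summable_deriv_besselClifford μ t).tsum_eq_zero_add, besselClifford, Nat.cast_zero, zero_mul,
    mul_zero, zero_add]
  refine tsum_congr fun m => ?_
  rw [← besselCliffordCoeff_succ_mul, Nat.add_sub_cancel]
  push_cast
  ring

lemma hasDerivAt_besselClifford :
    HasDerivAt (besselClifford μ) (besselClifford (μ + 1) t) t := by
  have ht : t ∈ Metric.ball (0 : ℝ) (|t| + 1) := by simp
  have hbound : Summable fun m : ℕ =>
      ‖besselCliffordCoeff μ m * (m * (|t| + 1) ^ (m - 1))‖ :=
    (summable_deriv_besselClifford μ (|t| + 1)).norm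
  rw [← tsum_deriv_besselClifford]
  refine hasDerivAt_tsum_of_isPreconnected hbound Metric.isOpen_ball
    (convex_ball _ _).isPreconnected (fun m z _ => (hasDerivAt_pow m z).const_mul _)
    (fun m z hz => ?_) ht (summable_besselClifford μ t) ht
  have hz : |z| ≤ |t| + 1 := (mem_ball_zero_iff.1 hz).le
  simp only [norm_mul, norm_pow, Real.norm_eq_abs, abs_of_nonneg (by positivity : 0 ≤ |t| + 1)]
  gcongr

lemma besselClifford_recurrence :
    besselClifford μ t = (μ + 1) * besselClifford (μ + 1) t + t * besselClifford (μ + 2) t := by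
  have hderiv := tsum_deriv_besselClifford (μ + 1) t
  have hμ : μ + 1 + 1 = μ + 2 := by ring
  rw [hμ] at hderiv
  rw [← hderiv, besselClifford, besselClifford, ← tsum_mul_left, ← tsum_mul_left,
    ← ((summable_besselClifford (μ + 1) t).mul_left _).tsum_add
      ((summable_deriv_besselClifford (μ + 1) t).mul_left _)]
  refine tsum_congr fun m => ?_
  rw [besselCliffordCoeff_eq_mul_add_one]
  cases m with
  | zero => simp
  | succ m => rw [Nat.add_sub_cancel]; ring

end BesselClifford

section AlternatingBounds

variable {μ t : ℝ}

lemma antitone_besselCliffordCoeff_mul_pow (hμ : -1 < μ) (ht : 0 ≤ t) (htμ : t ≤ μ + 1) :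
    Antitone fun m : ℕ => besselCliffordCoeff μ m * t ^ m := by
  refine antitone_nat_of_succ_le fun m => ?_
  have hcoeff := besselCliffordCoeff_pos hμ (m + 1)
  have hfactor : t ≤ (m + 1) * (μ + m + 1) := by
    nlinarith [(Nat.cast_nonneg m : (0 : ℝ) ≤ m)]
  rw [besselCliffordCoeff_eq_mul_succ μ m]
  calc besselCliffordCoeff μ (m + 1) * t ^ (m + 1)
      = t * besselCliffordCoeff μ (m + 1) * t ^ m := by ring
    _ ≤ _ := by gcongr

lemma tendsto_besselClifford_neg (μ t : ℝ) :
    Tendsto (fun n => ∑ m ∈ Finset.range n, (-1) ^ m * (besselCliffordCoeff μ m * t ^ m)) atTop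
      (𝓝 (besselClifford μ (-t))) := by
  convert (summable_besselClifford μ t).tendsto_alternating_series_tsum using 2
  refine tsum_congr fun m => ?_
  rw [neg_pow]
  ring

lemma besselClifford_neg_le (hμ : -1 < μ) (ht : 0 ≤ t) (htμ : t ≤ μ + 1) :
    besselClifford μ (-t) ≤ besselCliffordCoeff μ 0 := by
  simpa using (antitone_besselCliffordCoeff_mul_pow hμ ht htμ).tendsto_le_alternating_series
    (tendsto_besselClifford_neg μ t) 0

lemma le_besselClifford_neg (hμ : -1 < μ) (ht : 0 ≤ t) (htμ : t ≤ μ + 1) :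
    (μ + 1 - t) * besselCliffordCoeff (μ + 1) 0 ≤ besselClifford μ (-t) := by
  have hpartial :
      besselCliffordCoeff μ 0 - besselCliffordCoeff μ 1 * t ≤ besselClifford μ (-t) := by
    simpa [Finset.sum_range_succ, sub_eq_add_neg] using
      (antitone_besselCliffordCoeff_mul_pow hμ ht htμ).alternating_series_le_tendsto
        (tendsto_besselClifford_neg μ t) 1
  have hzero : besselCliffordCoeff μ 0 = (μ + 1) * besselCliffordCoeff (μ + 1) 0 := by
    simpa using besselCliffordCoeff_eq_mul_add_one μ 0
  have hone : besselCliffordCoeff μ 1 = besselCliffordCoeff (μ + 1) 0 := by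
    simpa using besselCliffordCoeff_succ_mul μ 0
  rw [hzero, hone, mul_comm _ t, ← sub_mul] at hpartial
  exact hpartial

end AlternatingBounds

section BesselJ

variable {μ z : ℝ}

lemma besselJ_eq_rpow_mul_besselClifford (μ : ℝ) (hz : 0 < z) :
    besselJ μ z = (z / 2) ^ μ * besselClifford μ (-(z / 2) ^ 2) := by
  rw [besselJ, besselClifford, ← tsum_mul_left]
  refine tsum_congr fun m => ?_
  rw [Real.rpow_add (by positivity), Real.rpow_mul (by positivity), Real.rpow_two,
    Real.rpow_natCast, neg_pow ((z / 2) ^ 2), besselCliffordCoeff]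
  ring

lemma besselJ_add_one_eq_rpow_mul_besselClifford (μ : ℝ) (hz : 0 < z) :
    besselJ (μ + 1) z = (z / 2) ^ μ * (z / 2 * besselClifford (μ + 1) (-(z / 2) ^ 2)) := by
  rw [besselJ_eq_rpow_mul_besselClifford _ hz, Real.rpow_add_one (by positivity), mul_assoc]

lemma besselJ_add_besselJ_add_two (μ : ℝ) (hz : 0 < z) :
    besselJ μ z + besselJ (μ + 2) z = 2 * (μ + 1) / z * besselJ (μ + 1) z := by
  rw [besselJ_eq_rpow_mul_besselClifford μ hz, besselJ_add_one_eq_rpow_mul_besselClifford μ hz,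
    besselJ_eq_rpow_mul_besselClifford (μ + 2) hz, besselClifford_recurrence,
    Real.rpow_add (by positivity), Real.rpow_two]
  field_simp
  ring

lemma hasDerivAt_besselJ (μ : ℝ) (hz : 0 < z) :
    HasDerivAt (besselJ μ) (μ / z * besselJ μ z - besselJ (μ + 1) z) z := by
  have hhalf : HasDerivAt (fun z : ℝ => z / 2) (1 / 2) z := (hasDerivAt_id z).div_const 2
  have hpow := hhalf.rpow_const (p := μ) (Or.inl (by positivity))
  have harg : HasDerivAt (fun z : ℝ => -(z / 2) ^ 2) (-(z / 2)) z :=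
    (hhalf.pow 2).neg.congr_deriv (by ring)
  have hclifford := (hasDerivAt_besselClifford μ (-(z / 2) ^ 2)).comp z harg
  have heq : besselJ μ =ᶠ[𝓝 z] fun z => (z / 2) ^ μ * besselClifford μ (-(z / 2) ^ 2) := by
    filter_upwards [lt_mem_nhds hz] with w hw using besselJ_eq_rpow_mul_besselClifford μ hw
  refine ((hpow.mul hclifford).congr_of_eventuallyEq heq).congr_deriv ?_
  rw [besselJ_eq_rpow_mul_besselClifford μ hz, besselJ_add_one_eq_rpow_mul_besselClifford μ hz,
    Real.rpow_sub_one (by positivity), Function.comp_apply]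
  field_simp
  ring

lemma hasDerivAt_besselJ_add_one (μ : ℝ) (hz : 0 < z) :
    HasDerivAt (besselJ (μ + 1)) (besselJ μ z - (μ + 1) / z * besselJ (μ + 1) z) z := by
  refine (hasDerivAt_besselJ (μ + 1) hz).congr_deriv ?_
  have hrec := besselJ_add_besselJ_add_two μ hz
  have hμ : μ + 1 + 1 = μ + 2 := by ring
  rw [hμ]
  linear_combination -hrec

lemma besselJ_pos (hμ : -1 < μ) (hz : 0 < z) (hzμ : (z / 2) ^ 2 < μ + 1) : 0 < besselJ μ z := by
  have hcoeff : 0 < besselCliffordCoeff (μ + 1) 0 := besselCliffordCoeff_pos (by linarith) 0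
  have hclifford := (mul_pos (sub_pos.2 hzμ) hcoeff).trans_le
    (le_besselClifford_neg hμ (sq_nonneg _) hzμ.le)
  rw [besselJ_eq_rpow_mul_besselClifford μ hz]
  positivity

lemma besselJ_add_one_lt (hμ : -1 < μ) (hz : 0 < z) (hzμ : z / 2 + (z / 2) ^ 2 < μ + 1) :
    besselJ (μ + 1) z < besselJ μ z := by
  have hcoeff : 0 < besselCliffordCoeff (μ + 1) 0 := besselCliffordCoeff_pos (by linarith) 0
  rw [besselJ_eq_rpow_mul_besselClifford μ hz, besselJ_add_one_eq_rpow_mul_besselClifford μ hz]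
  gcongr
  calc z / 2 * besselClifford (μ + 1) (-(z / 2) ^ 2)
      ≤ z / 2 * besselCliffordCoeff (μ + 1) 0 := by
        gcongr
        exact besselClifford_neg_le (by linarith) (sq_nonneg _) (by linarith)
    _ < (μ + 1 - (z / 2) ^ 2) * besselCliffordCoeff (μ + 1) 0 := by
        gcongr
        linarith
    _ ≤ besselClifford μ (-(z / 2) ^ 2) := le_besselClifford_neg hμ (sq_nonneg _) (by linarith)

lemma besselJ_add_nat_eq_zero (hz : 0 < z) (h₀ : besselJ μ z = 0) (h₁ : besselJ (μ + 1) z = 0)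
    (n : ℕ) : besselJ (μ + n) z = 0 ∧ besselJ (μ + n + 1) z = 0 := by
  induction n with
  | zero => simpa using ⟨h₀, h₁⟩
  | succ n ih =>
    have hrec := besselJ_add_besselJ_add_two (μ + n) hz
    rw [ih.1, ih.2, mul_zero, zero_add] at hrec
    have hsucc : μ + ((n + 1 : ℕ) : ℝ) = μ + n + 1 := by push_cast; ring
    have hsucc' : μ + n + 1 + 1 = μ + n + 2 := by ring
    rw [hsucc, hsucc']
    exact ⟨ih.2, hrec⟩

/-- A common zero would propagate to all higher orders, but `J_{μ+n}(z) > 0` for large `n`. -/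
lemma besselJ_add_one_ne_zero (hz : 0 < z) (h₀ : besselJ μ z = 0) : besselJ (μ + 1) z ≠ 0 := by
  intro h₁
  obtain ⟨n, hn⟩ := exists_nat_gt ((z / 2) ^ 2 - μ)
  exact (besselJ_pos (by nlinarith [sq_nonneg (z / 2)]) hz (by linarith)).ne'
    (besselJ_add_nat_eq_zero hz h₀ h₁ n).1

end BesselJ

/-- The sum `J_μ + J_{μ+1}` of Bessel functions of consecutive orders, whose `k`-th positive zero is
`λ⁺_{μ,k}`. -/
noncomputable def besselSum (μ z : ℝ) : ℝ := besselJ μ z + besselJ (μ + 1) z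

section BesselSum

variable {μ z : ℝ}

lemma hasDerivAt_besselSum (μ : ℝ) (hz : 0 < z) :
    HasDerivAt (besselSum μ)
      ((1 + μ / z) * besselJ μ z - (1 + (μ + 1) / z) * besselJ (μ + 1) z) z :=
  ((hasDerivAt_besselJ μ hz).add (hasDerivAt_besselJ_add_one μ hz)).congr_deriv (by ring)

lemma continuousOn_besselSum (μ : ℝ) : ContinuousOn (besselSum μ) (Ioi 0) :=
  fun _ hz => (hasDerivAt_besselSum μ hz).continuousAt.continuousWithinAt

lemma deriv_besselSum_of_eq_zero (hz : 0 < z) (hsum : besselSum μ z = 0) :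
    deriv (besselSum μ) z = (2 + (2 * μ + 1) / z) * besselJ μ z := by
  rw [besselSum] at hsum
  rw [(hasDerivAt_besselSum μ hz).deriv]
  linear_combination -(1 + (μ + 1) / z) * hsum

lemma besselSum_add_besselSum_add_one (μ : ℝ) (hz : 0 < z) :
    besselSum μ z + besselSum (μ + 1) z = 2 * ((μ + 1) / z + 1) * besselJ (μ + 1) z := by
  have hμ : μ + 1 + 1 = μ + 2 := by ring
  rw [besselSum, besselSum, hμ]
  linear_combination besselJ_add_besselJ_add_two μ hz

lemma besselJ_ne_zero_of_besselSum_eq_zero (hz : 0 < z) (hsum : besselSum μ z = 0) :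
    besselJ μ z ≠ 0 := by
  intro h₀
  rw [besselSum, h₀, zero_add] at hsum
  exact besselJ_add_one_ne_zero hz h₀ hsum

lemma besselSum_pos (hμ : -1 ≤ μ) (hz : 0 < z) (hz₁ : z ≤ 1) : 0 < besselSum μ z := by
  have hpos : 0 < besselJ (μ + 1) z := besselJ_pos (by linarith) hz (by nlinarith)
  have hlt : besselJ (μ + 1 + 1) z < besselJ (μ + 1) z :=
    besselJ_add_one_lt (by linarith) hz (by nlinarith)
  have hcoeff : 0 ≤ 2 * (μ + 1) / z := div_nonneg (by linarith) hz.le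
  have hadd := besselSum_add_besselSum_add_one μ hz
  calc 0 < 2 * (μ + 1) / z * besselJ (μ + 1) z + (besselJ (μ + 1) z - besselJ (μ + 1 + 1) z) := by
        have := sub_pos.2 hlt
        positivity
    _ = besselSum μ z := by
        rw [besselSum, besselSum] at hadd
        rw [besselSum]
        linear_combination -hadd

lemma eventually_besselSum_pos (hμ : -1 ≤ μ) : ∀ᶠ z in 𝓝[>] 0, 0 < besselSum μ z :=
  eventually_of_mem (Ioo_mem_nhdsGT one_pos) fun _ hz => besselSum_pos hμ hz.1 hz.2.le

lemma one_lt_of_besselSum_eq_zero (hμ : -1 ≤ μ) (hz : 0 < z) (hsum : besselSum μ z = 0) :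
    1 < z := by
  by_contra! hz₁
  exact (besselSum_pos hμ hz hz₁).ne' hsum

lemma deriv_besselSum_add_one_mul_besselSum_pos (hμ : -1 ≤ μ) (hz : 0 < z)
    (hsum : besselSum (μ + 1) z = 0) : 0 < deriv (besselSum (μ + 1)) z * besselSum μ z := by
  have hother := besselSum_add_besselSum_add_one μ hz
  rw [hsum, add_zero] at hother
  have hJ := besselJ_ne_zero_of_besselSum_eq_zero hz hsum
  have hμ' : 0 ≤ μ + 1 := by linarith
  calc 0 < (2 + (2 * (μ + 1) + 1) / z) * (2 * ((μ + 1) / z + 1)) * besselJ (μ + 1) z ^ 2 := by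
        positivity
    _ = _ := by rw [deriv_besselSum_of_eq_zero hz hsum, hother]; ring

lemma deriv_besselSum_mul_besselSum_add_one_neg (hμ : -1 ≤ μ) (hz : 0 < z)
    (hsum : besselSum μ z = 0) : deriv (besselSum μ) z * besselSum (μ + 1) z < 0 := by
  have hother := besselSum_add_besselSum_add_one μ hz
  rw [hsum, zero_add] at hother
  have hJ := besselJ_ne_zero_of_besselSum_eq_zero hz hsum
  have hneg : besselJ (μ + 1) z = -besselJ μ z := by rw [besselSum] at hsum; linarith
  have hμ' : 0 ≤ μ + 1 := by linarith
  have hslope : 0 < 2 + (2 * μ + 1) / z := by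
    have hz₁ := one_lt_of_besselSum_eq_zero hμ hz hsum
    have hnum : 0 < 2 * z + (2 * μ + 1) := by linarith
    calc 0 < (2 * z + (2 * μ + 1)) / z := by positivity
      _ = _ := by field_simp
  calc deriv (besselSum μ) z * besselSum (μ + 1) z
      = -((2 + (2 * μ + 1) / z) * (2 * ((μ + 1) / z + 1)) * besselJ μ z ^ 2) := by
        rw [deriv_besselSum_of_eq_zero hz hsum, hother, hneg]; ring
    _ < 0 := neg_lt_zero.2 (by positivity)

theorem enumPosZeros_besselSum_interlace (hμ : -1 ≤ μ) {x y : ℕ → ℝ}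
    (hx : EnumPosZeros (besselSum (μ + 1)) x) (hy : EnumPosZeros (besselSum μ) y) {k : ℕ}
    (hk : 1 ≤ k) : y k < x k ∧ x k < y (k + 1) :=
  hx.interlace hy (continuousOn_besselSum _) (continuousOn_besselSum _)
    (eventually_besselSum_pos (by linarith)) (eventually_besselSum_pos hμ)
    (fun _ => deriv_besselSum_add_one_mul_besselSum_pos hμ)
    (fun _ => deriv_besselSum_mul_besselSum_add_one_neg hμ) hk

end BesselSum

theorem stmt15_general {ν : ℝ} (hν : 1 ≤ ν) {lampm1 lampm2 : ℕ → ℝ}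
    (hlampm1 : EnumPosZeros (fun z => besselJ (ν - 1) z + besselJ ν z) lampm1)
    (hlampm2 : EnumPosZeros (fun z => besselJ (ν - 2) z + besselJ (ν - 1) z) lampm2)
    {k : ℕ} (hk : 1 ≤ k) : lampm2 k < lampm1 k ∧ lampm1 k < lampm2 (k + 1) := by
  obtain ⟨μ, rfl⟩ : ∃ μ, ν = μ + 1 + 1 := ⟨ν - 2, by ring⟩
  have hμ₁ : μ + 1 + 1 - 1 = μ + 1 := by ring
  have hμ₂ : μ + 1 + 1 - 2 = μ := by ring
  rw [hμ₁] at hlampm1 hlampm2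
  rw [hμ₂] at hlampm2
  exact enumPosZeros_besselSum_interlace (by linarith) hlampm1 hlampm2 hk

/-- For `ν ≥ 2` and every `k ≥ 1`,
`λ⁺_{ν−1,k+1} < λ⁺_{ν−2,k+2} < λ⁺_{ν−1,k+2}`: the positive zeroes of sums of Bessel
functions of consecutive orders interlace. -/
theorem stmt15 (ν : ℝ) (hν : 2 ≤ ν) (k : ℕ) (hk : 1 ≤ k)
    (lampm1 lampm2 : ℕ → ℝ)
    (hlampm1 : EnumPosZeros (fun z => besselJ (ν - 1) z + besselJ ν z) lampm1)
    (hlampm2 : EnumPosZeros (fun z => besselJ (ν - 2) z + besselJ (ν - 1) z) lampm2) :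
    lampm1 (k + 1) < lampm2 (k + 2) ∧ lampm2 (k + 2) < lampm1 (k + 2) := by
  have interlace {m : ℕ} (hm : 1 ≤ m) := stmt15_general (by linarith) hlampm1 hlampm2 hm
  exact ⟨(interlace (by omega)).2, (interlace (by omega)).1⟩
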